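/- Let T be a tree with weight function w. (i) Given any extended search tree (EST) D for T, applying a left deletion to the internal node of D assigned to r(T) and right deletions to all blocked and unassigned nodes of D yields a search tree D' for T with cost(D') ≤ cost(D) − w(r(T)); in particular, any optimal EST for T converts into an optimal search tree for T. (ii) Conversely, if there exists an optimal search tree for T of height h, then there exists an optimal EST for T of height h + 1. -/

import Mathlib

/-!
Both conversions change the cost in a controlled way: from an EST to a search tree it drops by at least
the weight of the root, and from a search tree to a suitable EST it grows by exactly that weight.

*From an EST to a search tree.* If `a` labels an internal node of an EST, then the leaf labelled `a`
lies in the right subtree of that node: it is not in the left subtree because `a ∈ T_a`, and it does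
not branch off at an ancestor because the search property at that ancestor would put `a` on both
sides (`good_of_internal_leaf`). Hence an internal node that is kept stays internal, the left subtree
removed at the root's internal node carries no node of `T`, and the conversion preserves the list of
real leaves (`leafList_convertEST`). Deletions never increase depths, and the leaf of the root moves
up by at least one level at the left deletion (`cost_convertEST`).

*From a search tree to an EST.* A search tree may have nodes with one child, and when weights vanish
even an optimal one may, possibly with repeated labels. Each of these is replaced by a blocked
node, and the leaf of the root of `T` by an internal node for the root with that leaf as right child
(`emb`). This costs exactly `w(r(T))` more. The labels of the nodes with two children are distinct,
differ from the root, and there is one fewer of them than there are leaves, so together with the new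
internal node every node of `T` labels exactly one internal node (`isEST_emb`). The left subtree of
the new internal node is a chain of blocked nodes, whose length is free; it is used to make the height
exactly `h + 1`.

Since the bound of the first conversion is attained by the second, both optimality claims follow.
-/

open scoped Classical

/-- Ordered binary trees, every node carrying a label (assignment). `nil` is the empty tree. -/
inductive BT (α : Type) where
  | nil : BT α
  | node (a : α) (l r : BT α) : BT α
  deriving DecidableEq

namespace BT

variable {α : Type}

/-- Labels of the leaves (nodes with no children), from left to right. -/
def leafList : BT α → List α
  | .nil => []
  | .node a .nil .nil => [a]
  | .node _ l r => l.leafList ++ r.leafList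

/-- Labels of all nodes. -/
def vals : BT α → List α
  | .nil => []
  | .node a l r => a :: (l.vals ++ r.vals)

/-- Leaf labels together with the depth (number of edges from the root) of the leaf. -/
def leafDepths : BT α → List (α × ℕ)
  | .nil => []
  | .node a .nil .nil => [(a, 0)]
  | .node _ l r => (l.leafDepths ++ r.leafDepths).map (fun p => (p.1, p.2 + 1))

/-- Height of a binary tree, in edges. -/
def height : BT α → ℕ
  | .nil => 0
  | .node _ .nil .nil => 0
  | .node _ l r => max l.height r.height + 1

/-- Label of the root. -/
def rootVal : BT α → Option α
  | .nil => none
  | .node a _ _ => some a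

/-- The labels of the nodes on the path from the root to the (leftmost) leaf labelled `x`. -/
def pathTo [DecidableEq α] : BT α → α → List α
  | .nil, _ => []
  | .node a l r, x => a :: (if x ∈ r.leafList then r.pathTo x else l.pathTo x)

/-- The depth (number of edges) of the leaf labelled `x`. -/
def depthOf [DecidableEq α] (D : BT α) (x : α) : ℕ := (D.pathTo x).length - 1

/-- The search-tree property w.r.t. a descendance relation `desc` (`desc u v` meaning
`v` lies in the subtree of the input tree rooted at `u`): everything in the right subtree
of a node labelled `a` is in the subtree of `a`, everything in the left subtree is not. -/
def SearchProp (desc : α → α → Prop) : BT α → Prop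
  | .nil => True
  | .node a l r =>
      (∀ b ∈ r.vals, desc a b) ∧ (∀ b ∈ l.vals, ¬ desc a b) ∧
        SearchProp desc l ∧ SearchProp desc r

/-- Cost (expected number of queries, unnormalized) of a search tree. -/
def cost (w : α → ℕ) (D : BT α) : ℕ := (D.leafDepths.map (fun p => p.2 * w p.1)).sum

/-- Total weight of the leaves of a search (sub)tree. -/
def leafWeight (w : α → ℕ) (D : BT α) : ℕ := (D.leafList.map w).sum

/-- All subtrees of a binary tree together with their depth. -/
def subtreesD : BT α → List (BT α × ℕ)
  | .nil => []
  | .node a l r =>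
      (BT.node a l r, 0) :: (l.subtreesD ++ r.subtreesD).map (fun p => (p.1, p.2 + 1))

end BT

/-- A finite rooted tree, encoded by a parent function on `Fin n`. -/
structure RTree where
  n : ℕ
  parent : Fin n → Fin n
  root : Fin n
  parent_root : parent root = root
  reach : ∀ v, ∃ k, parent^[k] v = root

namespace RTree

variable (T : RTree)

/-- `T.anc u v` holds iff `u` is a (weak) ancestor of `v`, i.e. `v ∈ T_u`. -/
def anc (u v : Fin T.n) : Prop := ∃ k, T.parent^[k] v = u

/-- The set of nodes of the subtree `T_u` rooted at `u`. -/
noncomputable def subtree (u : Fin T.n) : Finset (Fin T.n) :=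
  Finset.univ.filter (fun v => T.anc u v)

/-- Total weight of a set of nodes. -/
def wsum (w : Fin T.n → ℕ) (S : Finset (Fin T.n)) : ℕ := ∑ v ∈ S, w v

/-- `D` is a search tree for the entire tree `T`. -/
def IsSearchTree (D : BT (Fin T.n)) : Prop :=
  (∀ v : Fin T.n, D.leafList.count v = 1) ∧ BT.SearchProp T.anc D

/-- `D` is a search tree for the subtree (or subforest) of `T` induced by the node set `V'`. -/
def IsSearchTreeOn (V' : Finset (Fin T.n)) (D : BT (Fin T.n)) : Prop :=
  (∀ v : Fin T.n, D.leafList.count v = (if v ∈ V' then 1 else 0)) ∧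
    (∀ a ∈ D.vals, a ∈ V') ∧ BT.SearchProp T.anc D

/-- `D` is an optimal (minimum expected cost) search tree for `(T,w)`. -/
def IsOptimal (w : Fin T.n → ℕ) (D : BT (Fin T.n)) : Prop :=
  T.IsSearchTree D ∧ ∀ D' : BT (Fin T.n), T.IsSearchTree D' → BT.cost w D ≤ BT.cost w D'

/-- Degree of a node of `T` (number of neighbours). -/
noncomputable def degree (v : Fin T.n) : ℕ :=
  (Finset.univ.filter (fun u => T.parent u = v ∧ u ≠ v)).card + (if v = T.root then 0 else 1)

/-- Maximum degree `Δ(T)`. -/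
noncomputable def maxDegree : ℕ := Finset.univ.sup T.degree

/-- `y` lies on the (unique) path between `u` and `v` in `T`. -/
def onPath (y u v : Fin T.n) : Prop :=
  (T.anc y u ∨ T.anc y v) ∧ (∀ z, T.anc z u → T.anc z v → T.anc z y)

end RTree


/-- Values carried by the nodes of an *extended* search tree: either a node of the input
tree, or `blocked`, or `unassigned`. -/
inductive EVal (α : Type) where
  | val (a : α) : EVal α
  | blocked : EVal α
  | unassigned : EVal α
  deriving DecidableEq

namespace BT

/-- Labels of internal nodes (nodes with at least one child). -/
def internalVals : BT α → List α
  | .nil => []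
  | .node _ .nil .nil => []
  | .node a l r => a :: (l.internalVals ++ r.internalVals)

end BT

namespace EVal

/-- The underlying input-tree nodes of a list of extended values. -/
def reals {α : Type} (L : List (EVal α)) : List α :=
  L.filterMap (fun e => match e with | .val a => some a | _ => none)

end EVal

/-- Search property for extended search trees (conditions (b) and (c)):
for nodes carrying real values the usual search property holds, and a node assigned
`blocked` or `unassigned` has no right child. -/
def SearchPropE {α : Type} (desc : α → α → Prop) : BT (EVal α) → Prop
  | .nil => True
  | .node e l r =>
      (∀ a : α, e = EVal.val a →
        (∀ b ∈ EVal.reals l.vals, ¬ desc a b) ∧ (∀ b ∈ EVal.reals r.vals, desc a b)) ∧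
      ((e = EVal.blocked ∨ e = EVal.unassigned) → r = BT.nil) ∧
      SearchPropE desc l ∧ SearchPropE desc r

/-- Leaf labels (real values only) together with their depths, for an extended search tree. -/
def realLeafDepths {α : Type} (D : BT (EVal α)) : List (α × ℕ) :=
  D.leafDepths.filterMap (fun p => match p.1 with | .val a => some (a, p.2) | _ => none)

/-- Cost of an extended search tree: only leaves carrying real values count. -/
def costE {α : Type} (w : α → ℕ) (D : BT (EVal α)) : ℕ :=
  ((realLeafDepths D).map (fun p => p.2 * w p.1)).sum

/-- `D` is an extended search tree (EST) for the whole tree `T`: every node of `T` is the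
value of exactly one leaf and exactly one internal node, and the search/blocking
properties hold. -/
def RTree.IsEST (T : RTree) (D : BT (EVal (Fin T.n))) : Prop :=
  (∀ v : Fin T.n, (EVal.reals D.leafList).count v = 1) ∧
  (∀ v : Fin T.n, (EVal.reals D.internalVals).count v = 1) ∧
  SearchPropE T.anc D

/-- `D` is an optimal EST for `T`. -/
def RTree.IsOptimalEST (T : RTree) (w : Fin T.n → ℕ) (D : BT (EVal (Fin T.n))) : Prop :=
  T.IsEST D ∧ ∀ D' : BT (EVal (Fin T.n)), T.IsEST D' → costE w D ≤ costE w D'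

/-- The conversion of an EST into a search tree: apply a left deletion to the internal
node assigned to the root `rt` of `T`, and right deletions to all blocked and
unassigned nodes. -/
def convertEST {α : Type} [DecidableEq α] (rt : α) : BT (EVal α) → BT α
  | .nil => .nil
  | .node .blocked l _ => convertEST rt l
  | .node .unassigned l _ => convertEST rt l
  | .node (.val a) l r =>
      if a = rt ∧ (l ≠ BT.nil ∨ r ≠ BT.nil) then convertEST rt r
      else BT.node a (convertEST rt l) (convertEST rt r)

namespace BT

variable {α : Type}

/-! ### Recursive formulas at nodes that are not leaves -/

lemma leafList_node {a : α} {l r : BT α} (h : l ≠ nil ∨ r ≠ nil) :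
    (node a l r).leafList = l.leafList ++ r.leafList := by
  cases l <;> cases r <;> simp_all [leafList]

lemma internalVals_node {a : α} {l r : BT α} (h : l ≠ nil ∨ r ≠ nil) :
    (node a l r).internalVals = a :: (l.internalVals ++ r.internalVals) := by
  cases l <;> cases r <;> simp_all [internalVals]

lemma leafDepths_node {a : α} {l r : BT α} (h : l ≠ nil ∨ r ≠ nil) :
    (node a l r).leafDepths =
      (l.leafDepths ++ r.leafDepths).map (fun p => (p.1, p.2 + 1)) := by
  cases l <;> cases r <;> simp_all [leafDepths]

lemma height_node {a : α} {l r : BT α} (h : l ≠ nil ∨ r ≠ nil) :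
    (node a l r).height = max l.height r.height + 1 := by
  cases l <;> cases r <;> simp_all [height]

/-- Structural induction distinguishing nodes by which of their children exist. -/
lemma shapeInd {P : BT α → Prop} (hnil : P nil) (hleaf : ∀ a, P (node a nil nil))
    (hleft : ∀ a l, l ≠ nil → P l → P (node a l nil))
    (hright : ∀ a r, r ≠ nil → P r → P (node a nil r))
    (hboth : ∀ a l r, l ≠ nil → r ≠ nil → P l → P r → P (node a l r)) (D : BT α) : P D := by
  induction D with
  | nil => exact hnil
  | node a l r ihl ihr =>
    by_cases h1 : l = nil <;> by_cases h2 : r = nil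
    · subst h1 h2; exact hleaf a
    · subst h1; exact hright a r h2 ihr
    · subst h2; exact hleft a l h1 ihl
    · exact hboth a l r h1 h2 ihl ihr

lemma leafList_subset_vals (D : BT α) : ∀ x ∈ D.leafList, x ∈ D.vals := by
  induction D with
  | nil => simp [leafList]
  | node a l r ihl ihr =>
    by_cases h : l ≠ nil ∨ r ≠ nil
    · rw [leafList_node h]
      simp only [vals, List.mem_append, List.mem_cons]
      rintro x (hx | hx)
      · exact .inr (.inl (ihl x hx))
      · exact .inr (.inr (ihr x hx))
    · push Not at h
      obtain ⟨rfl, rfl⟩ := h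
      simp [leafList, vals]

lemma internalVals_subset_vals (D : BT α) : ∀ x ∈ D.internalVals, x ∈ D.vals := by
  induction D with
  | nil => simp [internalVals]
  | node a l r ihl ihr =>
    by_cases h : l ≠ nil ∨ r ≠ nil
    · rw [internalVals_node h]
      simp only [vals, List.mem_append, List.mem_cons]
      rintro x (hx | hx | hx)
      · exact .inl hx
      · exact .inr (.inl (ihl x hx))
      · exact .inr (.inr (ihr x hx))
    · push Not at h
      obtain ⟨rfl, rfl⟩ := h
      simp [internalVals]

lemma exists_leaf {D : BT α} : D ≠ nil → ∃ x, x ∈ D.leafList := by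
  induction D using shapeInd with
  | hnil => simp
  | hleaf a => simp [leafList]
  | hleft a l h ih => intro _; rw [leafList_node (.inl h)]; simpa [leafList] using ih h
  | hright a r h ih => intro _; rw [leafList_node (.inr h)]; simpa [leafList] using ih h
  | hboth a l r h1 h2 ihl ihr =>
    intro _; rw [leafList_node (.inl h1)]
    obtain ⟨x, hx⟩ := ihl h1
    exact ⟨x, by simp [hx]⟩

lemma leafDepths_map_fst (D : BT α) : D.leafDepths.map Prod.fst = D.leafList := by
  induction D with
  | nil => simp [leafDepths, leafList]
  | node a l r ihl ihr =>
    by_cases h : l ≠ nil ∨ r ≠ nil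
    · rw [leafDepths_node h, leafList_node h, ← ihl, ← ihr]
      simp [Function.comp_def]
    · push Not at h
      obtain ⟨rfl, rfl⟩ := h
      simp [leafDepths, leafList]

/-- Moving every leaf of a list down by one level adds its total weight to the cost. -/
lemma sum_shift (w : α → ℕ) (L : List (α × ℕ)) :
    ((L.map (fun p => (p.1, p.2 + 1))).map (fun p => p.2 * w p.1)).sum =
      (L.map (fun p => p.2 * w p.1)).sum + ((L.map Prod.fst).map w).sum := by
  induction L with
  | nil => simp
  | cons p L ih =>
    simp only [List.map_cons, List.sum_cons] at ih ⊢
    rw [ih]; ring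

lemma cost_node (w : α → ℕ) {a : α} {l r : BT α} (h : l ≠ nil ∨ r ≠ nil) :
    cost w (node a l r) = cost w l + cost w r + leafWeight w l + leafWeight w r := by
  rw [cost, leafDepths_node h, sum_shift]
  simp only [cost, leafWeight, List.map_append, List.sum_append, leafDepths_map_fst]
  ring

end BT

section ESTFacts

open BT EVal

variable {α : Type}

@[simp] lemma reals_nil : reals ([] : List (EVal α)) = [] := rfl

@[simp] lemma reals_val (a : α) (L : List (EVal α)) : reals (.val a :: L) = a :: reals L := rfl

@[simp] lemma reals_blocked (L : List (EVal α)) : reals (.blocked :: L) = reals L := rfl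

@[simp] lemma reals_unassigned (L : List (EVal α)) : reals (.unassigned :: L) = reals L := rfl

@[simp] lemma reals_append (L M : List (EVal α)) : reals (L ++ M) = reals L ++ reals M := by
  simp [reals]

lemma mem_reals {a : α} {L : List (EVal α)} : a ∈ reals L ↔ EVal.val a ∈ L := by
  induction L with
  | nil => simp
  | cons e L ih => cases e <;> simp [ih]

/-- Total weight of the leaves of an extended search tree carrying real values. -/
def leafWeightE (w : α → ℕ) (D : BT (EVal α)) : ℕ := ((reals D.leafList).map w).sum

lemma realLeafDepths_map_fst (D : BT (EVal α)) :
    (realLeafDepths D).map Prod.fst = reals D.leafList := by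
  rw [← leafDepths_map_fst, realLeafDepths]
  generalize D.leafDepths = L
  induction L with
  | nil => simp
  | cons p L ih => obtain ⟨e, n⟩ := p; cases e <;> simpa using ih

lemma realLeafDepths_node {e : EVal α} {l r : BT (EVal α)} (h : l ≠ nil ∨ r ≠ nil) :
    realLeafDepths (node e l r) =
      (realLeafDepths l ++ realLeafDepths r).map (fun p => (p.1, p.2 + 1)) := by
  rw [realLeafDepths, leafDepths_node h, realLeafDepths, realLeafDepths, ← List.filterMap_append]
  generalize l.leafDepths ++ r.leafDepths = L
  induction L with
  | nil => simp
  | cons p L ih => obtain ⟨e, n⟩ := p; cases e <;> simpa using ih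

lemma costE_node (w : α → ℕ) {e : EVal α} {l r : BT (EVal α)} (h : l ≠ nil ∨ r ≠ nil) :
    costE w (node e l r) = costE w l + costE w r + leafWeightE w l + leafWeightE w r := by
  rw [costE, realLeafDepths_node h, sum_shift]
  simp only [costE, leafWeightE, List.map_append, List.sum_append, realLeafDepths_map_fst]
  ring

@[simp] lemma costE_leaf (w : α → ℕ) (e : EVal α) : costE w (node e nil nil) = 0 := by
  cases e <;> simp [costE, realLeafDepths, leafDepths]

/-! ### Internal nodes and leaves of an extended search tree -/

/-- Every internal node carrying a real value `a` has the leaf of `a` in its right subtree. -/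
def Good : BT (EVal α) → Prop
  | .nil => True
  | .node e l r =>
      (∀ a, e = .val a → (l ≠ nil ∨ r ≠ nil) → a ∈ reals r.leafList) ∧ Good l ∧ Good r

lemma reals_leaf_vals {D : BT (EVal α)} {x : α} (h : x ∈ reals D.leafList) : x ∈ reals D.vals :=
  mem_reals.2 (leafList_subset_vals D _ (mem_reals.1 h))

lemma reals_internal_vals {D : BT (EVal α)} {x : α} (h : x ∈ reals D.internalVals) :
    x ∈ reals D.vals :=
  mem_reals.2 (internalVals_subset_vals D _ (mem_reals.1 h))

/-- If every value of an internal node also labels a leaf, then that leaf lies in the right subtree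
of the internal node. -/
lemma good_of_internal_leaf {desc : α → α → Prop} (hrefl : ∀ a, desc a a) (D : BT (EVal α)) :
    SearchPropE desc D → (∀ a ∈ reals D.internalVals, a ∈ reals D.leafList) → Good D := by
  induction D with
  | nil => intros; trivial
  | node e l r ihl ihr =>
    rintro ⟨hv, hb, hl, hr⟩ hi
    by_cases h : l ≠ nil ∨ r ≠ nil
    · rw [leafList_node h, internalVals_node h] at hi
      cases e with
      | val a =>
        obtain ⟨h1, h2⟩ := hv a rfl
        simp only [reals_val, reals_append, List.mem_cons, List.mem_append] at hi
        refine ⟨?_, ihl hl ?_, ihr hr ?_⟩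
        · rintro _ ⟨⟩ -
          exact (hi a (.inl rfl)).resolve_left fun h' => h1 a (reals_leaf_vals h') (hrefl a)
        · intro b hb
          exact (hi b (.inr (.inl hb))).resolve_right fun h' =>
            h1 b (reals_internal_vals hb) (h2 b (reals_leaf_vals h'))
        · intro b hb
          exact (hi b (.inr (.inr hb))).resolve_left fun h' =>
            h1 b (reals_leaf_vals h') (h2 b (reals_internal_vals hb))
      | blocked =>
        obtain rfl := hb (.inl rfl)
        exact ⟨by simp, ihl hl (by simpa [leafList, internalVals] using hi), trivial⟩
      | unassigned =>
        obtain rfl := hb (.inr rfl)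
        exact ⟨by simp, ihl hl (by simpa [leafList, internalVals] using hi), trivial⟩
    · push Not at h
      obtain ⟨rfl, rfl⟩ := h
      exact ⟨by simp, trivial, trivial⟩

/-! ### Chains of blocked nodes -/

/-- A chain of blocked nodes of height `k`. -/
def chain : ℕ → BT (EVal α)
  | 0 => node .blocked nil nil
  | k + 1 => node .blocked (chain k) nil

lemma chain_ne_nil (k : ℕ) : (chain k : BT (EVal α)) ≠ nil := by
  cases k <;> simp [chain]

lemma chain_vals (k : ℕ) : reals (chain k : BT (EVal α)).vals = [] := by
  induction k with
  | zero => simp [chain, vals]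
  | succ k ih => simpa [chain, vals] using ih

lemma chain_leafList (k : ℕ) : reals (chain k : BT (EVal α)).leafList = [] :=
  List.eq_nil_iff_forall_not_mem.2 fun x hx => by
    have := reals_leaf_vals hx
    simp [chain_vals] at this

lemma chain_internalVals (k : ℕ) : reals (chain k : BT (EVal α)).internalVals = [] :=
  List.eq_nil_iff_forall_not_mem.2 fun x hx => by
    have := reals_internal_vals hx
    simp [chain_vals] at this

lemma chain_height (k : ℕ) : (chain k : BT (EVal α)).height = k := by
  induction k with
  | zero => simp [chain, height]
  | succ k ih => rw [chain, height_node (.inl (chain_ne_nil k)), ih]; simp [height]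

lemma chain_searchPropE (desc : α → α → Prop) (k : ℕ) : SearchPropE desc (chain k) := by
  induction k with
  | zero => simp [chain, SearchPropE]
  | succ k ih => simpa [chain, SearchPropE] using ih

lemma chain_costE (w : α → ℕ) (k : ℕ) : costE w (chain k) = 0 := by
  have h : realLeafDepths (chain k : BT (EVal α)) = [] := by
    rw [← List.map_eq_nil_iff (f := Prod.fst), realLeafDepths_map_fst, chain_leafList]
  simp [costE, h]

/-! ### Converting an extended search tree -/

variable [DecidableEq α]

lemma vals_convertEST (rt : α) (D : BT (EVal α)) :
    ∀ x ∈ (convertEST rt D).vals, x ∈ reals D.vals := by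
  induction D with
  | nil => simp [convertEST, vals]
  | node e l r ihl ihr =>
    intro x
    cases e with
    | val a =>
      rw [convertEST]
      split_ifs with hc
      · intro hx
        simp [vals, ihr x hx]
      · simp only [vals, reals_val, reals_append, List.mem_cons, List.mem_append]
        rintro (h | h | h)
        · exact .inl h
        · exact .inr (.inl (ihl x h))
        · exact .inr (.inr (ihr x h))
    | blocked => intro hx; simp [vals, ihl x hx]
    | unassigned => intro hx; simp [vals, ihl x hx]

lemma searchProp_convertEST {desc : α → α → Prop} (rt : α) (D : BT (EVal α)) :
    SearchPropE desc D → SearchProp desc (convertEST rt D) := by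
  induction D with
  | nil => intro; trivial
  | node e l r ihl ihr =>
    rintro ⟨hv, hb, hl, hr⟩
    cases e with
    | val a =>
      rw [convertEST]
      split_ifs with hc
      · exact ihr hr
      · exact ⟨fun b hb => (hv a rfl).2 b (vals_convertEST rt r b hb),
          fun b hb => (hv a rfl).1 b (vals_convertEST rt l b hb), ihl hl, ihr hr⟩
    | blocked => exact ihl hl
    | unassigned => exact ihl hl

lemma leafList_convertEST {desc : α → α → Prop} {rt : α} (hrt : ∀ b, desc rt b)
    (D : BT (EVal α)) :
    SearchPropE desc D → Good D → (convertEST rt D).leafList = reals D.leafList := by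
  induction D with
  | nil => intros; simp [convertEST, leafList]
  | node e l r ihl ihr =>
    rintro ⟨hv, hb, hl, hr⟩ ⟨hg, gl, gr⟩
    by_cases h : l ≠ nil ∨ r ≠ nil
    · rw [leafList_node h, reals_append]
      cases e with
      | val a =>
        rw [convertEST]
        split_ifs with hc
        · obtain ⟨rfl, -⟩ := hc
          have : reals l.leafList = [] := List.eq_nil_iff_forall_not_mem.2 fun b hb =>
            (hv a rfl).1 b (reals_leaf_vals hb) (hrt b)
          rw [this, ihr hr gr, List.nil_append]
        · have hne : convertEST rt r ≠ nil := by
            intro h0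
            have := hg a rfl h
            rw [← ihr hr gr, h0] at this
            simp [leafList] at this
          rw [leafList_node (.inr hne), ihl hl gl, ihr hr gr]
      | blocked =>
        obtain rfl := hb (.inl rfl)
        simpa [convertEST, leafList] using ihl hl gl
      | unassigned =>
        obtain rfl := hb (.inr rfl)
        simpa [convertEST, leafList] using ihl hl gl
    · push Not at h
      obtain ⟨rfl, rfl⟩ := h
      cases e <;> simp [convertEST, leafList]

/-- The conversion does not increase the cost, and saves the weight of `rt` once the internal node
of `rt` is present. -/
lemma cost_convertEST {desc : α → α → Prop} {rt : α} (hrt : ∀ b, desc rt b) (w : α → ℕ)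
    (D : BT (EVal α)) : SearchPropE desc D → Good D →
      cost w (convertEST rt D) ≤ costE w D ∧
      (rt ∈ reals D.internalVals → cost w (convertEST rt D) + w rt ≤ costE w D) := by
  induction D with
  | nil => intros; simp [convertEST, cost, leafDepths, internalVals]
  | node e l r ihl ihr =>
    rintro ⟨hv, hb, hl, hr⟩ ⟨hg, gl, gr⟩
    obtain ⟨l1, l2⟩ := ihl hl gl
    obtain ⟨r1, r2⟩ := ihr hr gr
    by_cases h : l ≠ nil ∨ r ≠ nil
    · rw [costE_node w h, internalVals_node h]
      cases e with
      | val a =>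
        rw [convertEST]
        split_ifs with hc
        · obtain ⟨rfl, -⟩ := hc
          -- The leaf of the root is in `r`, so its weight is part of the weight of `r`.
          have : w a ≤ leafWeightE w r :=
            List.single_le_sum (by simp) _ (List.mem_map_of_mem (hg a rfl h))
          exact ⟨by omega, fun _ => by omega⟩
        · have hne : convertEST rt r ≠ nil := by
            intro h0
            have := hg a rfl h
            rw [← leafList_convertEST hrt r hr gr, h0] at this
            simp [leafList] at this
          have hna : rt ≠ a := fun h' => hc ⟨h'.symm, h⟩
          rw [cost_node w (.inr hne), leafWeight, leafWeight, leafList_convertEST hrt r hr gr,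
            leafList_convertEST hrt l hl gl]
          change _ + _ + leafWeightE w l + leafWeightE w r ≤ _ ∧
            (_ → _ + _ + leafWeightE w l + leafWeightE w r + _ ≤ _)
          refine ⟨by omega, fun hm => ?_⟩
          simp only [reals_val, reals_append, List.mem_cons, List.mem_append, hna, false_or] at hm
          rcases hm with hm | hm
          · have := l2 hm; omega
          · have := r2 hm; omega
      | blocked =>
        obtain rfl := hb (.inl rfl)
        refine ⟨by simp only [convertEST]; omega, fun hm => ?_⟩
        have := l2 (by simpa [internalVals] using hm)
        simp only [convertEST]; omega
      | unassigned =>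
        obtain rfl := hb (.inr rfl)
        refine ⟨by simp only [convertEST]; omega, fun hm => ?_⟩
        have := l2 (by simpa [internalVals] using hm)
        simp only [convertEST]; omega
    · push Not at h
      obtain ⟨rfl, rfl⟩ := h
      cases e <;> simp [convertEST, cost, leafDepths, internalVals]

/-! ### Extending a search tree -/

/-- The extended search tree obtained from a search tree by blocking the nodes with one child and
putting an internal node for `rt` above the leaf of `rt`. The left subtree of that new node is a chain
of blocked nodes which, when `k` is at least the height of the search tree, ends at depth `k + 1`;
for smaller `k` the subtraction `k - 1` may truncate, which affects nothing but the height. -/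
def emb (rt : α) : ℕ → BT α → BT (EVal α)
  | _, .nil => nil
  | k, .node a .nil .nil =>
      if a = rt then node (.val a) (chain k) (node (.val a) nil nil) else node (.val a) nil nil
  | k, .node _ (.node b x y) .nil => node .blocked (emb rt (k - 1) (.node b x y)) nil
  | k, .node _ .nil (.node b x y) => node .blocked (emb rt (k - 1) (.node b x y)) nil
  | k, .node a (.node b x y) (.node c z t) =>
      node (.val a) (emb rt (k - 1) (.node b x y)) (emb rt (k - 1) (.node c z t))

lemma emb_left (rt : α) (k : ℕ) (a : α) {l : BT α} (h : l ≠ nil) :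
    emb rt k (node a l nil) = node .blocked (emb rt (k - 1) l) nil := by
  cases l <;> simp_all [emb]

lemma emb_right (rt : α) (k : ℕ) (a : α) {r : BT α} (h : r ≠ nil) :
    emb rt k (node a nil r) = node .blocked (emb rt (k - 1) r) nil := by
  cases r <;> simp_all [emb]

lemma emb_both (rt : α) (k : ℕ) (a : α) {l r : BT α} (h : l ≠ nil) (h' : r ≠ nil) :
    emb rt k (node a l r) = node (.val a) (emb rt (k - 1) l) (emb rt (k - 1) r) := by
  cases l <;> cases r <;> simp_all [emb]

lemma emb_ne_nil (rt : α) (k : ℕ) {D : BT α} (h : D ≠ nil) : emb rt k D ≠ nil := by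
  induction D using shapeInd with
  | hnil => exact absurd rfl h
  | hleaf a => rw [emb]; split_ifs <;> simp
  | hleft a l hl _ => simp [emb_left rt k a hl]
  | hright a r hr _ => simp [emb_right rt k a hr]
  | hboth a l r hl hr _ _ => simp [emb_both rt k a hl hr]

lemma emb_leafList (rt : α) (D : BT α) : ∀ k, reals (emb rt k D).leafList = D.leafList := by
  induction D using shapeInd with
  | hnil => simp [emb, leafList]
  | hleaf a =>
    intro k
    rw [emb]
    split_ifs
    · rw [leafList_node (.inl (chain_ne_nil k)), reals_append, chain_leafList]
      simp [leafList]
    · simp [leafList]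
  | hleft a l h ih =>
    intro k
    rw [emb_left rt k a h, leafList_node (.inl (emb_ne_nil rt _ h)), leafList_node (.inl h)]
    simp [ih, leafList]
  | hright a r h ih =>
    intro k
    rw [emb_right rt k a h, leafList_node (.inl (emb_ne_nil rt _ h)), leafList_node (.inr h)]
    simp [ih, leafList]
  | hboth a l r h h' ihl ihr =>
    intro k
    rw [emb_both rt k a h h', leafList_node (.inl (emb_ne_nil rt _ h)), leafList_node (.inl h)]
    simp [ihl, ihr]

lemma emb_vals (rt : α) (D : BT α) : ∀ k, ∀ x ∈ reals (emb rt k D).vals, x ∈ D.vals := by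
  induction D using shapeInd with
  | hnil => simp [emb, vals]
  | hleaf a =>
    intro k
    rw [emb]
    split_ifs <;> simp [vals, chain_vals]
  | hleft a l h ih =>
    intro k x hx
    rw [emb_left rt k a h] at hx
    have := ih (k - 1) x (by simpa [vals] using hx)
    simp [vals, this]
  | hright a r h ih =>
    intro k x hx
    rw [emb_right rt k a h] at hx
    have := ih (k - 1) x (by simpa [vals] using hx)
    simp [vals, this]
  | hboth a l r h h' ihl ihr =>
    intro k x hx
    rw [emb_both rt k a h h'] at hx
    simp only [vals, reals_val, reals_append, List.mem_cons, List.mem_append] at hx ⊢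
    rcases hx with hx | hx | hx
    · exact .inl hx
    · exact .inr (.inl (ihl _ x hx))
    · exact .inr (.inr (ihr _ x hx))

lemma emb_searchPropE {desc : α → α → Prop} (hrefl : ∀ a, desc a a) (rt : α) (D : BT α) :
    ∀ k, SearchProp desc D → SearchPropE desc (emb rt k D) := by
  induction D using shapeInd with
  | hnil => intros; trivial
  | hleaf a =>
    intro k _
    rw [emb]
    split_ifs
    · simp [SearchPropE, chain_searchPropE, chain_vals, vals, hrefl]
    · simp [SearchPropE, vals]
  | hleft a l h ih =>
    rintro k ⟨-, -, hl, -⟩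
    rw [emb_left rt k a h]
    simpa [SearchPropE] using ih _ hl
  | hright a r h ih =>
    rintro k ⟨-, -, -, hr⟩
    rw [emb_right rt k a h]
    simpa [SearchPropE] using ih _ hr
  | hboth a l r h h' ihl ihr =>
    rintro k ⟨h1, h2, hl, hr⟩
    rw [emb_both rt k a h h']
    refine ⟨?_, by simp, ihl _ hl, ihr _ hr⟩
    rintro _ ⟨⟩
    exact ⟨fun b hb => h2 b (emb_vals rt l _ b hb), fun b hb => h1 b (emb_vals rt r _ b hb)⟩

lemma emb_costE (w : α → ℕ) (rt : α) (D : BT α) :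
    ∀ k, costE w (emb rt k D) = cost w D + D.leafList.count rt * w rt := by
  have hW : ∀ k (D : BT α), leafWeightE w (emb rt k D) = leafWeight w D := fun k D => by
    rw [leafWeightE, emb_leafList, leafWeight]
  have hn : costE w nil = 0 ∧ leafWeightE w nil = 0 ∧ cost w nil = 0 ∧ leafWeight w nil = 0 := by
    simp [costE, leafWeightE, cost, leafWeight, realLeafDepths, leafDepths, leafList]
  obtain ⟨n1, n2, n3, n4⟩ := hn
  induction D using shapeInd with
  | hnil => simp [emb, costE, realLeafDepths, leafDepths, cost, leafList]
  | hleaf a =>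
    intro k
    rw [emb]
    split_ifs with ha
    · subst ha
      rw [costE_node w (.inl (chain_ne_nil k)), chain_costE]
      simp [leafWeightE, chain_leafList, leafList, cost, leafDepths]
    · simp [cost, leafDepths, leafList, ha]
  | hleft a l h ih =>
    intro k
    rw [emb_left rt k a h, costE_node w (.inl (emb_ne_nil rt _ h)), cost_node w (.inl h),
      leafList_node (.inl h), ih, hW]
    simp only [n1, n2, n3, n4, leafList, List.append_nil]
    ring
  | hright a r h ih =>
    intro k
    rw [emb_right rt k a h, costE_node w (.inl (emb_ne_nil rt _ h)), cost_node w (.inr h),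
      leafList_node (.inr h), ih, hW]
    simp only [n1, n2, n3, n4, leafList, List.nil_append]
    ring
  | hboth a l r h h' ihl ihr =>
    intro k
    rw [emb_both rt k a h h', costE_node w (.inl (emb_ne_nil rt _ h)), cost_node w (.inl h),
      leafList_node (.inl h), ihl, ihr, hW, hW, List.count_append]
    ring

lemma emb_height (rt : α) (D : BT α) : ∀ k, D.height ≤ k →
    (rt ∈ D.leafList → (emb rt k D).height = k + 1) ∧
    (rt ∉ D.leafList → (emb rt k D).height = D.height) := by
  induction D using shapeInd with
  | hnil => simp [emb, leafList, height]
  | hleaf a =>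
    intro k _
    rw [emb]
    split_ifs with ha
    · subst ha
      rw [height_node (.inl (chain_ne_nil k)), chain_height]
      simp [leafList, height]
    · simp [leafList, height, Ne.symm ha]
  | hleft a l h ih =>
    intro k hk
    rw [height_node (.inl h)] at hk
    simp only [height, Nat.max_zero] at hk
    rw [emb_left rt k a h, height_node (.inl (emb_ne_nil rt _ h)), height_node (.inl h),
      leafList_node (.inl h)]
    obtain ⟨h1, h2⟩ := ih (k - 1) (by omega)
    simp only [height, Nat.max_zero, leafList, List.append_nil]
    exact ⟨fun hm => by rw [h1 hm]; omega, fun hm => by rw [h2 hm]⟩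
  | hright a r h ih =>
    intro k hk
    rw [height_node (.inr h)] at hk
    simp only [height, Nat.zero_max] at hk
    rw [emb_right rt k a h, height_node (.inl (emb_ne_nil rt _ h)), height_node (.inr h),
      leafList_node (.inr h)]
    obtain ⟨h1, h2⟩ := ih (k - 1) (by omega)
    simp only [height, Nat.max_zero, Nat.zero_max, leafList, List.nil_append]
    exact ⟨fun hm => by rw [h1 hm]; omega, fun hm => by rw [h2 hm]⟩
  | hboth a l r h h' ihl ihr =>
    intro k hk
    rw [height_node (.inl h)] at hk
    rw [emb_both rt k a h h', height_node (.inl (emb_ne_nil rt _ h)), height_node (.inl h),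
      leafList_node (.inl h), List.mem_append]
    obtain ⟨l1, l2⟩ := ihl (k - 1) (by omega)
    obtain ⟨r1, r2⟩ := ihr (k - 1) (by omega)
    by_cases hl : rt ∈ l.leafList <;> by_cases hr : rt ∈ r.leafList
    · simp only [hl, hr, l1 hl, r1 hr]; refine ⟨fun _ => by omega, by simp⟩
    · simp only [hl, hr, l1 hl, r2 hr]; refine ⟨fun _ => by omega, by simp⟩
    · simp only [hl, hr, l2 hl, r1 hr]; refine ⟨fun _ => by omega, by simp⟩
    · simp only [hl, hr, l2 hl, r2 hr]; simp

/-- A binary tree has one fewer node with two children than leaves; the internal nodes added for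
`rt` are counted separately. -/
lemma emb_length (rt : α) {D : BT α} (hD : D ≠ nil) :
    ∀ k, (reals (emb rt k D).internalVals).length + 1 =
      D.leafList.length + D.leafList.count rt := by
  induction D using shapeInd with
  | hnil => exact absurd rfl hD
  | hleaf a =>
    intro k
    rw [emb]
    split_ifs with ha
    · subst ha
      rw [internalVals_node (.inl (chain_ne_nil k))]
      simp [leafList, chain_internalVals, internalVals]
    · simp [leafList, internalVals, ha]
  | hleft a l h ih =>
    intro k
    rw [emb_left rt k a h, internalVals_node (.inl (emb_ne_nil rt _ h)), leafList_node (.inl h)]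
    simpa [internalVals, leafList] using ih h (k - 1)
  | hright a r h ih =>
    intro k
    rw [emb_right rt k a h, internalVals_node (.inl (emb_ne_nil rt _ h)), leafList_node (.inr h)]
    simpa [internalVals, leafList] using ih h (k - 1)
  | hboth a l r h h' ihl ihr =>
    intro k
    rw [emb_both rt k a h h', internalVals_node (.inl (emb_ne_nil rt _ h)),
      leafList_node (.inl h)]
    have h1 := ihl h (k - 1)
    have h2 := ihr h' (k - 1)
    simp only [reals_val, reals_append, List.length_cons, List.length_append, List.count_append]
    omega

/-- The internal nodes of the extended tree have distinct values. The second part, that each value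
other than `rt` properly separates the leaves, is what the induction needs to exclude that a node with
two children has its own label in its right subtree. -/
lemma emb_nodup {desc : α → α → Prop} (hrefl : ∀ a, desc a a) {rt : α} (hrt : ∀ b, desc rt b)
    (D : BT α) :
    ∀ k, SearchProp desc D → (reals (emb rt k D).internalVals).Nodup ∧
      ∀ b ∈ reals (emb rt k D).internalVals, b ≠ rt → ∃ x ∈ D.leafList, ¬ desc b x := by
  induction D using shapeInd with
  | hnil => simp [emb, internalVals]
  | hleaf a =>
    intro k _
    rw [emb]
    split_ifs with ha
    · subst ha
      rw [internalVals_node (.inl (chain_ne_nil k))]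
      simp [chain_internalVals, internalVals]
    · simp [internalVals]
  | hleft a l h ih =>
    rintro k ⟨-, -, hl, -⟩
    rw [emb_left rt k a h, internalVals_node (.inl (emb_ne_nil rt _ h)), leafList_node (.inl h)]
    simpa [internalVals, leafList] using ih (k - 1) hl
  | hright a r h ih =>
    rintro k ⟨-, -, -, hr⟩
    rw [emb_right rt k a h, internalVals_node (.inl (emb_ne_nil rt _ h)), leafList_node (.inr h)]
    simpa [internalVals, leafList] using ih (k - 1) hr
  | hboth a l r h h' ihl ihr =>
    rintro k ⟨h1, h2, hl, hr⟩
    rw [emb_both rt k a h h', internalVals_node (.inl (emb_ne_nil rt _ h)),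
      leafList_node (.inl h)]
    obtain ⟨dl, sl⟩ := ihl (k - 1) hl
    obtain ⟨dr, sr⟩ := ihr (k - 1) hr
    obtain ⟨y, hy⟩ := exists_leaf h
    have hya : ¬ desc a y := h2 y (leafList_subset_vals l y hy)
    have hart : a ≠ rt := by rintro rfl; exact hya (hrt y)
    have hL : ∀ b ∈ reals (emb rt (k - 1) l).internalVals, ¬ desc a b := fun b hb =>
      h2 b (emb_vals rt l _ b (reals_internal_vals hb))
    have hR : ∀ b ∈ reals (emb rt (k - 1) r).internalVals, desc a b := fun b hb =>
      h1 b (emb_vals rt r _ b (reals_internal_vals hb))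
    have har : a ∉ reals (emb rt (k - 1) r).internalVals := fun hm => by
      obtain ⟨x, hx, hn⟩ := sr a hm hart
      exact hn (h1 x (leafList_subset_vals r x hx))
    have hal : a ∉ reals (emb rt (k - 1) l).internalVals := fun hm => hL a hm (hrefl a)
    simp only [reals_val, reals_append]
    refine ⟨?_, ?_⟩
    · rw [List.nodup_cons, List.nodup_append']
      refine ⟨by simp [hal, har], dl, dr, fun b hb hb' => hL b hb (hR b hb')⟩
    · intro b hb hbr
      simp only [List.mem_cons, List.mem_append] at hb
      rcases hb with rfl | hb | hb
      · exact ⟨y, by simp [hy], hya⟩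
      · obtain ⟨x, hx, hn⟩ := sl b hb hbr
        exact ⟨x, by simp [hx], hn⟩
      · obtain ⟨x, hx, hn⟩ := sr b hb hbr
        exact ⟨x, by simp [hx], hn⟩

end ESTFacts

/-! ### Search trees and extended search trees of a rooted tree -/

namespace RTree

variable (T : RTree)

lemma anc_refl (a : Fin T.n) : T.anc a a := ⟨0, rfl⟩

lemma anc_root (b : Fin T.n) : T.anc T.root b := T.reach b

lemma convert_spec (w : Fin T.n → ℕ) {D : BT (EVal (Fin T.n))} (hD : T.IsEST D) :
    T.IsSearchTree (convertEST T.root D) ∧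
      BT.cost w (convertEST T.root D) + w T.root ≤ costE w D := by
  obtain ⟨h1, h2, h3⟩ := hD
  have hg : Good D := good_of_internal_leaf T.anc_refl D h3 fun a _ =>
    List.count_pos_iff.1 (by rw [h1 a]; exact one_pos)
  refine ⟨⟨?_, searchProp_convertEST _ D h3⟩, (cost_convertEST T.anc_root w D h3 hg).2 ?_⟩
  · rw [leafList_convertEST T.anc_root D h3 hg]; exact h1
  · exact List.count_pos_iff.1 (by rw [h2]; exact one_pos)

lemma root_mem_leafList {D : BT (Fin T.n)} (hD : T.IsSearchTree D) : T.root ∈ D.leafList :=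
  List.count_pos_iff.1 (by rw [hD.1]; exact one_pos)

lemma isEST_emb {D : BT (Fin T.n)} (hD : T.IsSearchTree D) (k : ℕ) :
    T.IsEST (emb T.root k D) := by
  have hroot := T.root_mem_leafList hD
  obtain ⟨h1, h2⟩ := hD
  have hne : D ≠ BT.nil := by rintro rfl; simp [BT.leafList] at hroot
  refine ⟨?_, ?_, emb_searchPropE T.anc_refl _ D k h2⟩
  · rw [emb_leafList]; exact h1
  have hlen := emb_length T.root hne k
  have hnd := (emb_nodup T.anc_refl T.anc_root D k h2).1
  have hleaf : D.leafList.length = T.n := by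
    have hn : D.leafList.Nodup := List.nodup_iff_count_le_one.2 fun a => (h1 a).le
    have hu : D.leafList.toFinset = Finset.univ := by
      ext v
      simp only [List.mem_toFinset, Finset.mem_univ, iff_true]
      exact List.count_pos_iff.1 (by rw [h1]; exact one_pos)
    rw [← List.toFinset_card_of_nodup hn, hu, Finset.card_univ, Fintype.card_fin]
  rw [hleaf, h1, Nat.add_right_cancel_iff] at hlen
  -- Distinct values, as many as there are nodes of `T`: every node occurs.
  have hu : (EVal.reals (emb T.root k D).internalVals).toFinset = Finset.univ := by
    apply Finset.eq_univ_of_card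
    rw [List.toFinset_card_of_nodup hnd, hlen, Fintype.card_fin]
  intro v
  exact List.count_eq_one_of_mem hnd (List.mem_toFinset.1 (hu ▸ Finset.mem_univ v))

lemma costE_emb (w : Fin T.n → ℕ) {D : BT (Fin T.n)} (hD : T.IsSearchTree D) (k : ℕ) :
    costE w (emb T.root k D) = BT.cost w D + w T.root := by
  rw [emb_costE, hD.1, one_mul]

end RTree


/-- (i) Converting an EST `D` for `T` (left deletion of the internal node assigned to the
root, right deletions of all blocked/unassigned nodes) yields a search tree `D'` for `T`
with `cost(D') ≤ cost(D) − w(r(T))`; in particular an optimal EST converts into an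
optimal search tree.  (ii) If there is an optimal search tree for `T` of height `h`, then
there is an optimal EST for `T` of height `h + 1`. -/
theorem statement3 (T : RTree) (w : Fin T.n → ℕ) :
    (∀ D : BT (EVal (Fin T.n)), T.IsEST D →
        T.IsSearchTree (convertEST T.root D) ∧
        BT.cost w (convertEST T.root D) + w T.root ≤ costE w D) ∧
    (∀ D : BT (EVal (Fin T.n)), T.IsOptimalEST w D →
        T.IsOptimal w (convertEST T.root D)) ∧
    (∀ h : ℕ, (∃ D : BT (Fin T.n), T.IsOptimal w D ∧ D.height = h) →
        ∃ E : BT (EVal (Fin T.n)), T.IsOptimalEST w E ∧ E.height = h + 1) := by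
  refine ⟨fun D hD => T.convert_spec w hD, fun D hD => ?_, ?_⟩
  · obtain ⟨hs, hc⟩ := T.convert_spec w hD.1
    refine ⟨hs, fun D' hD' => ?_⟩
    have := hD.2 _ (T.isEST_emb hD' 0)
    rw [T.costE_emb w hD'] at this
    omega
  · rintro h ⟨D, ⟨hs, ho⟩, rfl⟩
    refine ⟨emb T.root D.height D, ⟨T.isEST_emb hs _, fun E hE => ?_⟩,
      (emb_height T.root D _ le_rfl).1 (T.root_mem_leafList hs)⟩
    obtain ⟨hs', hc⟩ := T.convert_spec w hE
    rw [T.costE_emb w hs]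
    have := ho _ hs'
    omega
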